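/- Let N ≥ 2, ρ = e^{2πi/N}, and let A_i = {e^{2πiθ} : i/N ≤ θ < (i+1)/N} for i = 0, …, N−1. For a measurable function u : 𝕋 → 𝕋, define the irreducible Cuntz family π^u = (S_i^u)_{i=0}^{N−1} on L²(𝕋) by (S_i^u ξ)(z) = √N · χ_{A_i}(z) · u(z) · ξ(z^N). Let u, u' : 𝕋 → 𝕋 be measurable. Then the following are equivalent: (i) π^u and π^{u'} are unitarily equivalent, i.e., there exists a unitary W on L²(𝕋) with W S_i^u = S_i^{u'} W for all i = 0, …, N−1; (ii) the cocycles u and u' cobound: there exists a measurable function Δ : 𝕋 → 𝕋 such that Δ(z) u(z) = u'(z) Δ(z^N) for almost every z ∈ 𝕋. -/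

import Mathlib

open MeasureTheory Real

noncomputable section

instance : Fact (0 < 2 * Real.pi) := ⟨by positivity⟩

/-- The circle `𝕋 = ℝ/2πℤ`, written additively; the point `(s : 𝕋)` corresponds to `e^{is}`
and `N • z` corresponds to `z ↦ z^N`. -/
abbrev Circle2π : Type := AddCircle (2 * Real.pi)

/-- Normalized Haar (probability) measure on the circle. -/
abbrev haarT : Measure Circle2π := AddCircle.haarAddCircle

/-- `L²(𝕋)`. -/
abbrev HT : Type := Lp ℂ 2 haarT

/-- The arc `A_i = {e^{2πiθ} : i/N ≤ θ < (i+1)/N}`. -/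
def arc (N : ℕ) (i : Fin N) : Set Circle2π :=
  (fun θ : ℝ => ((2 * Real.pi * θ : ℝ) : Circle2π)) ''
    Set.Ico (((i : ℕ) : ℝ) / N) ((((i : ℕ) : ℝ) + 1) / N)


/-- The angle coordinate in `[0,1)`. -/
def theta (z : Circle2π) : ℝ := (AddCircle.equivIco (2 * Real.pi) 0 z : ℝ) / (2 * Real.pi)

/-- Inverse of `theta`. -/
def pt (t : ℝ) : Circle2π := ((2 * Real.pi * t : ℝ) : Circle2π)

theorem theta_nonneg (z : Circle2π) : 0 ≤ theta z := by
  have := (AddCircle.equivIco (2 * Real.pi) 0 z).2.1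
  unfold theta; positivity

theorem theta_lt_one (z : Circle2π) : theta z < 1 := by
  have := (AddCircle.equivIco (2 * Real.pi) 0 z).2.2
  unfold theta
  rw [div_lt_one (by positivity)]; simpa using this

theorem pt_theta (z : Circle2π) : pt (theta z) = z := by
  unfold pt theta
  rw [mul_div_cancel₀ _ (by positivity)]
  exact AddCircle.coe_equivIco

theorem theta_pt {t : ℝ} (h0 : 0 ≤ t) (h1 : t < 1) : theta (pt t) = t := by
  unfold pt theta
  rw [AddCircle.equivIco_coe_of_mem]
  · field_simp
  · constructor
    · positivity
    · have : 0 < 2 * Real.pi := by positivity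
      nlinarith

theorem pt_sub_nat (t : ℝ) (k : ℕ) : pt (t - k) = pt t := by
  unfold pt
  have h : 2 * Real.pi * (t - k) = 2 * Real.pi * t - k • (2 * Real.pi) := by
    rw [nsmul_eq_mul]; ring
  rw [h, AddCircle.coe_sub, AddCircle.coe_nsmul, AddCircle.coe_period]
  simp

theorem nsmul_pt (N : ℕ) (t : ℝ) : N • pt t = pt (N * t) := by
  unfold pt
  rw [← AddCircle.coe_nsmul, nsmul_eq_mul]; congr 1; ring

theorem pt_add (s t : ℝ) : pt (s + t) = pt s + pt t := by
  unfold pt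
  rw [← AddCircle.coe_add]; congr 1; ring

theorem measurable_theta : Measurable theta := by
  have := (AddCircle.measurableEquivIco (2 * Real.pi) 0).measurable
  exact (measurable_subtype_coe.comp this).div_const _

theorem measurable_pt : Measurable pt := by
  have : Continuous pt := by
    unfold pt
    exact (AddCircle.continuous_mk' _).comp (continuous_const.mul continuous_id)
  exact this.measurable

theorem mem_arc_iff {N : ℕ} (hN : 2 ≤ N) (i : Fin N) (z : Circle2π) :
    z ∈ arc N i ↔ ((i : ℕ) : ℝ) ≤ N * theta z ∧ N * theta z < (i : ℕ) + 1 := by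
  have hN0 : (0 : ℝ) < N := by positivity
  have hi : ((i : ℕ) : ℝ) + 1 ≤ N := by exact_mod_cast i.2
  constructor
  · rintro ⟨t, ⟨h1, h2⟩, rfl⟩
    rw [div_le_iff₀ hN0] at h1
    rw [lt_div_iff₀ hN0] at h2
    have : theta (pt t) = t := theta_pt (by by_contra! h; nlinarith [Nat.cast_nonneg (α := ℝ) (i : ℕ)])
      (by by_contra! h; nlinarith)
    change _ ≤ N * theta (pt t) ∧ N * theta (pt t) < _
    rw [this]
    constructor <;> linarith
  · rintro ⟨h1, h2⟩
    refine ⟨theta z, ⟨?_, ?_⟩, pt_theta z⟩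
    · rw [div_le_iff₀ hN0]; linarith
    · rw [lt_div_iff₀ hN0]; linarith

theorem measurableSet_arc {N : ℕ} (hN : 2 ≤ N) (i : Fin N) : MeasurableSet (arc N i) := by
  have : arc N i = (fun z => N * theta z) ⁻¹' (Set.Ico ((i : ℕ) : ℝ) ((i : ℕ) + 1)) := by
    ext z; exact mem_arc_iff hN i z
  rw [this]
  exact (measurable_theta.const_mul _) measurableSet_Ico

theorem exists_mem_arc {N : ℕ} (hN : 2 ≤ N) (z : Circle2π) : ∃ i : Fin N, z ∈ arc N i := by
  have h0 := theta_nonneg z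
  have h1 := theta_lt_one z
  have hN0 : (0 : ℝ) < N := by positivity
  have hp : 0 ≤ N * theta z := by positivity
  refine ⟨⟨⌊N * theta z⌋₊, ?_⟩, ?_⟩
  · rw [Nat.floor_lt hp]; nlinarith
  · rw [mem_arc_iff hN]
    exact ⟨Nat.floor_le hp, Nat.lt_floor_add_one _⟩

theorem arc_unique {N : ℕ} (hN : 2 ≤ N) {i j : Fin N} {z : Circle2π}
    (hi : z ∈ arc N i) (hj : z ∈ arc N j) : i = j := by
  rw [mem_arc_iff hN] at hi hj
  have h1 : (i : ℕ) < (j : ℕ) + 1 := by exact_mod_cast hi.1.trans_lt hj.2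
  have h2 : (j : ℕ) < (i : ℕ) + 1 := by exact_mod_cast hj.1.trans_lt hi.2
  ext; omega

theorem theta_nsmul {N : ℕ} (hN : 2 ≤ N) {i : Fin N} {z : Circle2π} (hi : z ∈ arc N i) :
    theta (N • z) = N * theta z - (i : ℕ) := by
  rw [mem_arc_iff hN] at hi
  conv_lhs => rw [← pt_theta z, nsmul_pt, ← pt_sub_nat _ (i : ℕ)]
  exact theta_pt (by linarith) (by linarith)

/-- Inverse branches of `z ↦ N • z`. -/
def branch (N : ℕ) (i : Fin N) (z : Circle2π) : Circle2π := pt ((theta z + (i : ℕ)) / N)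

theorem measurable_branch (N : ℕ) (i : Fin N) : Measurable (branch N i) :=
  measurable_pt.comp ((measurable_theta.add_const _).div_const _)

theorem nsmul_branch {N : ℕ} (hN : 2 ≤ N) (i : Fin N) (z : Circle2π) :
    N • branch N i z = z := by
  have hN0 : (0 : ℝ) < N := by positivity
  unfold branch
  rw [nsmul_pt, mul_div_cancel₀ _ hN0.ne', ← pt_sub_nat _ (i : ℕ), add_sub_cancel_right, pt_theta]

theorem branch_mem {N : ℕ} (hN : 2 ≤ N) (i : Fin N) (z : Circle2π) :
    branch N i z ∈ arc N i := by
  have h0 := theta_nonneg z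
  have h1 := theta_lt_one z
  have hN0 : (0 : ℝ) < N := by positivity
  refine ⟨_, ⟨?_, ?_⟩, rfl⟩
  · exact div_le_div_of_nonneg_right (by linarith) hN0.le
  · exact div_lt_div_of_pos_right (by linarith) hN0

theorem branch_nsmul' {N : ℕ} (hN : 2 ≤ N) (i : Fin N) {j : Fin N} {z : Circle2π}
    (hj : z ∈ arc N j) : branch N i (N • z) = z + pt (((i : ℕ) - (j : ℕ) : ℝ) / N) := by
  have hN0 : (0 : ℝ) < N := by positivity
  unfold branch
  rw [theta_nsmul hN hj]
  conv_rhs => rw [← pt_theta z, ← pt_add]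
  congr 1; field_simp; ring

theorem branch_nsmul {N : ℕ} (hN : 2 ≤ N) {i : Fin N} {z : Circle2π}
    (hi : z ∈ arc N i) : branch N i (N • z) = z := by
  rw [branch_nsmul' hN i hi]; simp [pt]

theorem mp_nsmul {N : ℕ} (hN : 2 ≤ N) :
    MeasurePreserving (fun z : Circle2π => N • z) haarT haarT := by
  have : haarT.IsAddHaarMeasure := by infer_instance
  have h := Measure.measurePreserving_zsmul haarT (n := (N : ℤ)) (by positivity)
  simpa using h

theorem map_branch_le {N : ℕ} (hN : 2 ≤ N) (i : Fin N) :
    haarT.map (branch N i) ≤ (N : ENNReal) • haarT := by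
  rw [Measure.le_iff]
  intro E hE
  rw [Measure.map_apply (measurable_branch N i) hE,
    ← (mp_nsmul hN).measure_preimage ((measurable_branch N i) hE).nullMeasurableSet]
  calc _ ≤ haarT (⋃ j : Fin N, (fun z => z + pt (((i : ℕ) - (j : ℕ) : ℝ) / N)) ⁻¹' E) := by
        apply measure_mono
        intro z hz
        obtain ⟨j, hj⟩ := exists_mem_arc hN z
        simp only [Set.mem_preimage, branch_nsmul' hN i hj] at hz
        exact Set.mem_iUnion.2 ⟨j, hz⟩
    _ ≤ ∑ j : Fin N, haarT ((fun z => z + pt (((i : ℕ) - (j : ℕ) : ℝ) / N)) ⁻¹' E) :=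
        measure_iUnion_fintype_le _ _
    _ = _ := by
        simp [measure_preimage_add_right]

theorem qmp_branch {N : ℕ} (hN : 2 ≤ N) (i : Fin N) :
    Measure.QuasiMeasurePreserving (branch N i) haarT haarT :=
  ⟨measurable_branch N i, (Measure.absolutelyContinuous_of_le (map_branch_le hN i)).trans
    Measure.smul_absolutelyContinuous⟩

theorem memLp_mul {g : Circle2π → ℂ} (hg : Measurable g) (h1 : ∀ z, ‖g z‖ = 1) (ξ : HT) :
    MemLp (fun z => g z * ξ z) 2 haarT := by
  refine (Lp.memLp ξ).mono (hg.aestronglyMeasurable.mul (Lp.aestronglyMeasurable ξ)) ?_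
  filter_upwards with z
  rw [norm_mul, h1, one_mul]

/-- Multiplication by a unimodular function, as a linear map. -/
def mulLin (g : Circle2π → ℂ) (hg : Measurable g) (h1 : ∀ z, ‖g z‖ = 1) : HT →ₗ[ℂ] HT where
  toFun ξ := (memLp_mul hg h1 ξ).toLp
  map_add' ξ η := by
    apply Lp.ext
    filter_upwards [(memLp_mul hg h1 (ξ + η)).coeFn_toLp, (memLp_mul hg h1 ξ).coeFn_toLp,
      (memLp_mul hg h1 η).coeFn_toLp, Lp.coeFn_add ξ η,
      Lp.coeFn_add (memLp_mul hg h1 ξ).toLp (memLp_mul hg h1 η).toLp] with z a b c d e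
    rw [e, a, Pi.add_apply, b, c, d, Pi.add_apply]; ring
  map_smul' k ξ := by
    apply Lp.ext
    filter_upwards [(memLp_mul hg h1 (k • ξ)).coeFn_toLp, (memLp_mul hg h1 ξ).coeFn_toLp,
      Lp.coeFn_smul k ξ, Lp.coeFn_smul k (memLp_mul hg h1 ξ).toLp] with z a b c d
    rw [RingHom.id_apply, d, a, Pi.smul_apply, b, c, Pi.smul_apply, smul_eq_mul, smul_eq_mul]; ring

theorem mulLin_coe {g : Circle2π → ℂ} (hg : Measurable g) (h1 : ∀ z, ‖g z‖ = 1) (ξ : HT) :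
    mulLin g hg h1 ξ =ᵐ[haarT] fun z => g z * ξ z := (memLp_mul hg h1 ξ).coeFn_toLp

theorem exists_mulU {g : Circle2π → ℂ} (hg : Measurable g) (h1 : ∀ z, ‖g z‖ = 1) :
    ∃ M : HT ≃ₗᵢ[ℂ] HT, ∀ ξ, M ξ =ᵐ[haarT] fun z => g z * ξ z := by
  have hg' : Measurable (fun z => (g z)⁻¹) := hg.inv
  have h1' : ∀ z, ‖(g z)⁻¹‖ = 1 := fun z => by rw [norm_inv, h1, inv_one]
  have hne : ∀ z, g z ≠ 0 := fun z h => by have := h1 z; rw [h] at this; simp at this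
  refine ⟨⟨LinearEquiv.ofLinearMap (mulLin g hg h1) (mulLin _ hg' h1') ?_ ?_, ?_⟩,
    fun ξ => mulLin_coe hg h1 ξ⟩
  · ext1 ξ
    apply Lp.ext
    filter_upwards [mulLin_coe hg h1 (mulLin _ hg' h1' ξ), mulLin_coe hg' h1' ξ] with z a b
    simp only [LinearMap.comp_apply, LinearMap.id_apply]
    rw [a, b, mul_inv_cancel_left₀ (hne z)]
  · ext1 ξ
    apply Lp.ext
    filter_upwards [mulLin_coe hg' h1' (mulLin _ hg h1 ξ), mulLin_coe hg h1 ξ] with z a b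
    simp only [LinearMap.comp_apply, LinearMap.id_apply]
    rw [a, b, inv_mul_cancel_left₀ (hne z)]
  · intro ξ
    change ‖mulLin g hg h1 ξ‖ = _
    rw [Lp.norm_def, Lp.norm_def]
    congr 1
    apply eLpNorm_congr_norm_ae
    filter_upwards [mulLin_coe hg h1 ξ] with z a
    rw [a, norm_mul, h1, one_mul]

/-- `ξ` vanishes a.e. on `A`. -/
def Van (A : Set Circle2π) (ξ : HT) : Prop := ∀ᵐ z ∂haarT, z ∈ A → ξ z = 0

theorem van_compl_iff {A : Set Circle2π} (hA : MeasurableSet A) (ξ : HT) :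
    Van Aᶜ ξ ↔ ∀ η : HT, Van A η → inner ℂ η ξ = 0 := by
  constructor
  · intro h η hη
    rw [L2.inner_def]
    refine integral_eq_zero_of_ae ?_
    filter_upwards [h, hη] with z a b
    by_cases hz : z ∈ A
    · simp [b hz]
    · simp [a hz]
  · intro h
    have hm : MemLp (Aᶜ.indicator ξ) 2 haarT := (Lp.memLp ξ).indicator hA.compl
    have h0 : Van A hm.toLp := by
      filter_upwards [hm.coeFn_toLp] with z a hz
      rw [a]; simp [hz]
    have h2 := h _ h0
    have h3 : inner ℂ hm.toLp hm.toLp = inner ℂ hm.toLp ξ := by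
      rw [L2.inner_def, L2.inner_def]
      apply integral_congr_ae
      filter_upwards [hm.coeFn_toLp] with z a
      rw [a]
      by_cases hz : z ∈ A <;> simp [hz]
    rw [h2, inner_self_eq_zero] at h3
    have h4 := hm.coeFn_toLp
    rw [h3] at h4
    filter_upwards [h4, Lp.coeFn_zero ℂ 2 haarT] with z a b hz
    rw [b] at a
    simpa [hz] using a.symm

/-- Sets preserved by `W`. -/
def Good (W : HT ≃ₗᵢ[ℂ] HT) (A : Set Circle2π) : Prop :=
  MeasurableSet A ∧ ∀ ξ, Van A ξ ↔ Van A (W ξ)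

/-- The sigma-algebra of preserved sets. -/
@[reducible]
def goodSpace (W : HT ≃ₗᵢ[ℂ] HT) : MeasurableSpace Circle2π where
  MeasurableSet' := Good W
  measurableSet_empty := ⟨MeasurableSet.empty, fun ξ => by simp [Van]⟩
  measurableSet_compl A hA := by
    refine ⟨hA.1.compl, fun ξ => ?_⟩
    rw [van_compl_iff hA.1, van_compl_iff hA.1]
    constructor
    · intro h η hη
      have := h (W.symm η) ((hA.2 _).2 (by simpa using hη))
      rw [← W.inner_map_map] at this
      simpa using this
    · intro h η hη
      have := h (W η) ((hA.2 _).1 hη)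
      rwa [W.inner_map_map] at this
  measurableSet_iUnion A hA := by
    refine ⟨MeasurableSet.iUnion fun n => (hA n).1, fun ξ => ?_⟩
    have key : ∀ ζ : HT, Van (⋃ n, A n) ζ ↔ ∀ n, Van (A n) ζ := by
      intro ζ
      unfold Van
      rw [← ae_all_iff]
      simp only [Set.mem_iUnion, forall_exists_index]
    rw [key, key]
    exact forall_congr' fun n => (hA n).2 ξ

/-- All measurable sets are preserved as soon as the sigma-algebra of preserved sets is
stable under the inverse branches. -/
theorem good_all {N : ℕ} (hN : 2 ≤ N) (W : HT ≃ₗᵢ[ℂ] HT)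
    (hW : ∀ i : Fin N, ∀ A, Good W A → Good W (arc N i ∩ (fun z => N • z) ⁻¹' A))
    {E : Set Circle2π} (hE : MeasurableSet E) : Good W E := by
  have hN0 : (0 : ℝ) < N := by positivity
  have hT : Measurable[goodSpace W, goodSpace W] (fun z : Circle2π => N • z) := by
    intro A hA
    have : (fun z : Circle2π => N • z) ⁻¹' A = ⋃ i : Fin N, arc N i ∩ (fun z => N • z) ⁻¹' A := by
      rw [← Set.iUnion_inter, Set.iUnion_eq_univ_iff.2 (exists_mem_arc hN), Set.univ_inter]
    rw [this]
    exact @MeasurableSet.iUnion _ _ (goodSpace W) _ _ (fun i => hW i A hA)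
  have harc : ∀ i : Fin N, MeasurableSet[goodSpace W] (arc N i) := fun i => by
    have := hW i Set.univ (@MeasurableSet.univ _ (goodSpace W))
    rw [Set.preimage_univ, Set.inter_univ] at this
    exact this
  choose d hd using exists_mem_arc hN
  have hdm : Measurable[goodSpace W] (fun z => ((d z : ℕ) : ℝ)) := by
    have h1 : @Measurable _ _ (goodSpace W) _ d := by
      refine @measurable_to_countable' _ _ _ _ (goodSpace W) _ ?_
      intro i
      convert harc i
      ext z
      exact ⟨fun h => by rw [← show d z = i from h]; exact hd z, fun h => arc_unique hN (hd z) h⟩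
    exact (measurable_from_top (f := fun i : Fin N => ((i : ℕ) : ℝ))).comp h1
  let f : ℕ → Circle2π → ℝ := fun n => Nat.rec (fun _ => 0)
    (fun _ g z => (((d z : ℕ) : ℝ) + g (N • z)) / N) n
  have hf : ∀ n, Measurable[goodSpace W] (f n) := by
    intro n
    induction n with
    | zero => exact @measurable_const _ _ _ (goodSpace W) _
    | succ n ih =>
      have h1 : Measurable[goodSpace W] (fun z => ((d z : ℕ) : ℝ) + f n (N • z)) :=
        Measurable.add hdm (ih.comp hT)
      exact Measurable.div_const h1 _
  have hfe : ∀ n z, |f n z - theta z| ≤ (1 / (N : ℝ)) ^ n := by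
    intro n
    induction n with
    | zero =>
      intro z
      have h0 := theta_nonneg z
      have h1 := theta_lt_one z
      change |0 - theta z| ≤ _
      rw [zero_sub, abs_neg, abs_of_nonneg h0, pow_zero]; exact h1.le
    | succ n ih =>
      intro z
      have h2 := theta_nsmul hN (hd z)
      have h3 : f (n + 1) z - theta z = (f n (N • z) - theta (N • z)) / N := by
        change (((d z : ℕ) : ℝ) + f n (N • z)) / N - theta z = _
        rw [h2]; field_simp; ring
      rw [h3, abs_div, abs_of_pos hN0, pow_succ, div_eq_mul_one_div]
      exact mul_le_mul_of_nonneg_right (ih _) (by positivity)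
  have hth : Measurable[goodSpace W] theta := by
    refine @measurable_of_tendsto_metrizable _ _ (goodSpace W) _ _ _ _ f _ hf ?_
    rw [tendsto_pi_nhds]
    intro z
    rw [tendsto_iff_dist_tendsto_zero]
    refine squeeze_zero (fun _ => dist_nonneg) (fun n => hfe n z) ?_
    apply tendsto_pow_atTop_nhds_zero_of_lt_one (by positivity)
    rw [div_lt_one hN0]
    exact_mod_cast (by omega : 1 < N)
  have hE2 : E = theta ⁻¹' (pt ⁻¹' E) := by
    ext z; simp [pt_theta]
  rw [hE2]
  exact hth (measurable_pt hE)

theorem exists_eta {N : ℕ} (hN : 2 ≤ N) {u : Circle2π → ℂ} (hu : Measurable u)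
    (h1 : ∀ z, ‖u z‖ = 1) (ξ : HT) (i : Fin N) :
    ∃ η : HT, ∀ᵐ z ∂haarT, z ∈ arc N i → ξ z = (Real.sqrt N : ℂ) * u z * η (N • z) := by
  have hN0 : (0 : ℝ) < N := by positivity
  have hs : (Real.sqrt N : ℂ) ≠ 0 := by
    exact_mod_cast (Real.sqrt_pos.2 hN0).ne'
  have hne : ∀ z, u z ≠ 0 := fun z h => by have := h1 z; rw [h] at this; simp at this
  have m1 : MemLp (fun z => (Real.sqrt N : ℂ)⁻¹ * ((u z)⁻¹ * ξ z)) 2 haarT :=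
    (memLp_mul hu.inv (fun z => by rw [Pi.inv_apply, norm_inv, h1, inv_one]) ξ).const_mul _
  have m2 : MemLp (fun z => (Real.sqrt N : ℂ)⁻¹ * ((u z)⁻¹ * ξ z)) 2
      (haarT.map (branch N i)) :=
    (m1.smul_measure (c := (N : ENNReal)) (ENNReal.natCast_ne_top N)).mono_measure
      (map_branch_le hN i)
  have m3 := m2.comp_of_map (measurable_branch N i).aemeasurable
  refine ⟨m3.toLp, ?_⟩
  filter_upwards [(mp_nsmul hN).quasiMeasurePreserving.ae m3.coeFn_toLp] with z a hz
  rw [a, Function.comp_apply, branch_nsmul hN hz]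
  field_simp [hne z]

theorem sum_coe {N : ℕ} (hN : 2 ≤ N) {u : Circle2π → ℂ} {S : Fin N → HT →L[ℂ] HT}
    (hS : ∀ i, ∀ ξ : HT, ⇑(S i ξ) =ᵐ[haarT] fun z =>
      (Real.sqrt N : ℂ) * Set.indicator (arc N i) (fun _ => (1 : ℂ)) z * u z * ξ (N • z))
    (η : Fin N → HT) : ∀ᵐ z ∂haarT, ∀ i, z ∈ arc N i →
      (∑ j, S j (η j) : HT) z = (Real.sqrt N : ℂ) * u z * η i (N • z) := by
  have h1 : ∀ᵐ z ∂haarT, ∀ j, S j (η j) z = (Real.sqrt N : ℂ) *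
      Set.indicator (arc N j) (fun _ => (1 : ℂ)) z * u z * η j (N • z) :=
    ae_all_iff.2 fun j => hS j (η j)
  filter_upwards [h1, Lp.coeFn_finsetSum Finset.univ (fun j => S j (η j))] with z a b i hi
  rw [b, Finset.sum_apply, Finset.sum_eq_single i]
  · rw [a, Set.indicator_of_mem hi, mul_one]
  · intro j _ hj
    rw [a, Set.indicator_of_notMem (fun h => hj (arc_unique hN h hi))]; ring
  · simp

theorem van_step {N : ℕ} (hN : 2 ≤ N) {u : Circle2π → ℂ} (h1 : ∀ z, ‖u z‖ = 1)
    {ξ η : HT} {i : Fin N} {A : Set Circle2π}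
    (h : ∀ᵐ z ∂haarT, z ∈ arc N i → ξ z = (Real.sqrt N : ℂ) * u z * η (N • z)) :
    Van (arc N i ∩ (fun z => N • z) ⁻¹' A) ξ ↔ Van A η := by
  have hN0 : (0 : ℝ) < N := by positivity
  have hs : (Real.sqrt N : ℂ) ≠ 0 := by
    exact_mod_cast (Real.sqrt_pos.2 hN0).ne'
  have hne : ∀ z, u z ≠ 0 := fun z h => by have := h1 z; rw [h] at this; simp at this
  constructor
  · intro hv
    filter_upwards [(qmp_branch hN i).ae h, (qmp_branch hN i).ae hv] with z a b hz
    have a' := a (branch_mem hN i z)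
    rw [b ⟨branch_mem hN i z, by simpa [nsmul_branch hN] using hz⟩, nsmul_branch hN] at a'
    simpa [hs, hne] using a'.symm
  · intro hv
    filter_upwards [h, (mp_nsmul hN).quasiMeasurePreserving.ae hv] with z a b hz
    rw [a hz.1, b hz.2, mul_zero]

theorem good_step {N : ℕ} (hN : 2 ≤ N)
    {u u' : Circle2π → ℂ}
    (hu_meas : Measurable u) (hu_mod : ∀ z, ‖u z‖ = 1)
    (hu'_mod : ∀ z, ‖u' z‖ = 1)
    {Su Su' : Fin N → HT →L[ℂ] HT}
    (hSu : ∀ i, ∀ ξ : HT, ⇑(Su i ξ) =ᵐ[haarT] fun z =>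
      (Real.sqrt N : ℂ) * Set.indicator (arc N i) (fun _ => (1 : ℂ)) z * u z * ξ (N • z))
    (hSu' : ∀ i, ∀ ξ : HT, ⇑(Su' i ξ) =ᵐ[haarT] fun z =>
      (Real.sqrt N : ℂ) * Set.indicator (arc N i) (fun _ => (1 : ℂ)) z * u' z * ξ (N • z))
    {W : HT ≃ₗᵢ[ℂ] HT} (hW : ∀ i, ∀ ξ : HT, W (Su i ξ) = Su' i (W ξ))
    (i : Fin N) (A : Set Circle2π) (hA : Good W A) :
    Good W (arc N i ∩ (fun z => N • z) ⁻¹' A) := by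
  refine ⟨(measurableSet_arc hN i).inter ((mp_nsmul hN).measurable hA.1), fun ξ => ?_⟩
  choose η hη using exists_eta hN hu_meas hu_mod ξ
  have h1 : ξ = ∑ j, Su j (η j) := by
    apply Lp.ext
    filter_upwards [sum_coe hN hSu η, ae_all_iff.2 hη] with z a b
    obtain ⟨j, hj⟩ := exists_mem_arc hN z
    rw [a j hj, b j hj]
  have h2 : W ξ = ∑ j, Su' j (W (η j)) := by
    conv_lhs => rw [h1]
    rw [map_sum]
    exact Finset.sum_congr rfl fun j _ => hW j _
  have h3 : ∀ᵐ z ∂haarT, z ∈ arc N i →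
      W ξ z = (Real.sqrt N : ℂ) * u' z * W (η i) (N • z) := by
    rw [h2]
    filter_upwards [sum_coe hN hSu' (fun j => W (η j))] with z a hz
    exact a i hz
  rw [van_step hN hu_mod (hη i), van_step hN hu'_mod h3]
  exact hA.2 _

/-- A unitary preserving all supports is a multiplication operator. -/
theorem exists_symbol (W : HT ≃ₗᵢ[ℂ] HT) (hW : ∀ E, MeasurableSet E → Good W E) :
    ∃ Δ : Circle2π → ℂ, Measurable Δ ∧ (∀ z, ‖Δ z‖ = 1) ∧
      ∀ ξ, W ξ =ᵐ[haarT] fun z => Δ z * ξ z := by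
  let e : ∀ E : Set Circle2π, MeasurableSet E → ℂ → HT := fun E hE c =>
    indicatorConstLp 2 hE (measure_ne_top haarT E) c
  let D : HT := W (e Set.univ MeasurableSet.univ 1)
  have key : ∀ E (hE : MeasurableSet E), W (e E hE 1) =ᵐ[haarT] E.indicator D := by
    intro E hE
    have v1 : Van Eᶜ (e E hE 1) := by
      filter_upwards [indicatorConstLp_coeFn (p := 2) (hs := hE) (hμs := measure_ne_top haarT E)
        (c := (1 : ℂ))] with z a hz
      exact a.trans (Set.indicator_of_notMem hz _)
    have v2 : Van E (e Set.univ MeasurableSet.univ 1 - e E hE 1) := by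
      filter_upwards [indicatorConstLp_coeFn (p := 2) (hs := hE) (hμs := measure_ne_top haarT E)
        (c := (1 : ℂ)), indicatorConstLp_coeFn (p := 2) (hs := MeasurableSet.univ)
          (hμs := measure_ne_top haarT Set.univ) (c := (1 : ℂ)),
        Lp.coeFn_sub (e Set.univ MeasurableSet.univ 1) (e E hE 1)] with z a b c hz
      rw [c, Pi.sub_apply]
      simp only [e]
      rw [a, b]; simp [hz]
    have w1 := ((hW _ hE.compl).2 _).1 v1
    have w2 := ((hW _ hE).2 _).1 v2
    rw [map_sub] at w2
    filter_upwards [w1, w2, Lp.coeFn_sub D (W (e E hE 1))] with z a b c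
    by_cases hz : z ∈ E
    · have b' := b hz
      change (D - W (e E hE 1) : HT) z = 0 at b'
      rw [c, Pi.sub_apply, sub_eq_zero] at b'
      rw [Set.indicator_of_mem hz, b']
    · rw [a hz, Set.indicator_of_notMem hz]
  have hnorm : ∀ᵐ z ∂haarT, ‖D z‖ = 1 := by
    have hD : AEMeasurable (fun z => ‖D z‖ₑ ^ (2 : ℝ)) haarT :=
      (Lp.aestronglyMeasurable D).enorm.pow_const _
    have : (fun z => ‖D z‖ₑ ^ (2 : ℝ)) =ᵐ[haarT] fun _ => 1 := by
      refine ae_eq_of_forall_setLIntegral_eq_of_sigmaFinite₀ hD aemeasurable_const ?_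
      intro E hE _
      have n1 : eLpNorm (E.indicator D) 2 haarT
          = eLpNorm (E.indicator fun _ => (1 : ℂ)) 2 haarT := by
        rw [← eLpNorm_congr_ae (key E hE), ← eLpNorm_congr_ae (indicatorConstLp_coeFn (p := 2)
          (hs := hE) (hμs := measure_ne_top haarT E) (c := (1 : ℂ)))]
        have := W.norm_map (e E hE 1)
        rw [Lp.norm_def, Lp.norm_def, ENNReal.toReal_eq_toReal_iff' (Lp.eLpNorm_ne_top _)
          (Lp.eLpNorm_ne_top _)] at this
        exact this
      rw [eLpNorm_indicator_eq_eLpNorm_restrict hE, eLpNorm_indicator_eq_eLpNorm_restrict hE,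
        eLpNorm_eq_lintegral_rpow_enorm_toReal (by simp) (by simp),
        eLpNorm_eq_lintegral_rpow_enorm_toReal (by simp) (by simp)] at n1
      have n2 := ENNReal.rpow_left_injective (x := 1 / (2 : ENNReal).toReal) (by simp) n1
      simpa using n2
    filter_upwards [this] with z a
    have b := congrArg (fun t : ENNReal => (t ^ (1 / 2 : ℝ)).toReal) a
    simp only [← ENNReal.rpow_mul] at b
    simpa using b
  obtain ⟨D₀, hD₀, hDD⟩ : ∃ D₀ : Circle2π → ℂ, Measurable D₀ ∧ D =ᵐ[haarT] D₀ :=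
    ⟨(Lp.aestronglyMeasurable D).mk D, (Lp.aestronglyMeasurable D).stronglyMeasurable_mk.measurable,
      (Lp.aestronglyMeasurable D).ae_eq_mk⟩
  classical
  let Δ : Circle2π → ℂ := fun z => if ‖D₀ z‖ = 1 then D₀ z else 1
  have hΔm : Measurable Δ :=
    Measurable.ite (measurableSet_eq_fun hD₀.norm measurable_const) hD₀ measurable_const
  have hΔ1 : ∀ z, ‖Δ z‖ = 1 := by
    intro z
    by_cases h : ‖D₀ z‖ = 1 <;> simp [Δ, h]
  have hΔD : D =ᵐ[haarT] Δ := by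
    filter_upwards [hDD, hnorm] with z a b
    rw [a] at b
    simp [Δ, b, a]
  obtain ⟨M, hM⟩ := exists_mulU hΔm hΔ1
  refine ⟨Δ, hΔm, hΔ1, fun ξ => ?_⟩
  suffices h : W ξ = M ξ by rw [h]; exact hM ξ
  refine Lp.induction (p := 2) (by simp) (fun ξ : HT => W ξ = M ξ) ?_ ?_ ?_ ξ
  · intro c E hE hμ
    rw [Lp.simpleFunc.coe_indicatorConst]
    have h1 : indicatorConstLp 2 hE hμ.ne c = c • e E hE 1 := by
      apply Lp.ext
      filter_upwards [indicatorConstLp_coeFn (p := 2) (hs := hE) (hμs := hμ.ne) (c := c),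
        indicatorConstLp_coeFn (p := 2) (hs := hE) (hμs := hμ.ne) (c := (1 : ℂ)),
        Lp.coeFn_smul c (e E hE 1)] with z a b d
      rw [a, d, Pi.smul_apply]
      simp only [e]
      rw [b]
      by_cases hz : z ∈ E <;> simp [hz]
    rw [h1, map_smul, map_smul]
    congr 1
    apply Lp.ext
    filter_upwards [key E hE, hM (e E hE 1), hΔD,
      indicatorConstLp_coeFn (p := 2) (hs := hE) (hμs := hμ.ne) (c := (1 : ℂ))] with z a b d f
    rw [a, b]
    simp only [e]
    rw [f]
    by_cases hz : z ∈ E <;> simp [hz, d]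
  · intro f g hf hg _ h1 h2
    rw [map_add, map_add, h1, h2]
  · exact isClosed_eq W.continuous M.continuous

/-- **Corollary 6.2.** The irreducible representations `π^u`, `π^{u'}` of `𝒪_N` given by
`(Sᵢ^u ξ)(z) = √N χ_{Aᵢ}(z) u(z) ξ(z^N)` are unitarily equivalent iff the cocycles `u, u'`
cobound: `Δ(z) u(z) = u'(z) Δ(z^N)` a.e. for some measurable `Δ : 𝕋 → 𝕋`. -/
theorem diagonal_representations_unitarily_equivalent_iff_cocycles_cobound
    (N : ℕ) (hN : 2 ≤ N)
    (u u' : Circle2π → ℂ)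
    (hu_meas : Measurable u) (hu_mod : ∀ z, ‖u z‖ = 1)
    (hu'_meas : Measurable u') (hu'_mod : ∀ z, ‖u' z‖ = 1)
    (Su Su' : Fin N → HT →L[ℂ] HT)
    (hSu : ∀ i, ∀ ξ : HT, ⇑(Su i ξ) =ᵐ[haarT] fun z =>
      (Real.sqrt N : ℂ) * Set.indicator (arc N i) (fun _ => (1 : ℂ)) z * u z * ξ (N • z))
    (hSu' : ∀ i, ∀ ξ : HT, ⇑(Su' i ξ) =ᵐ[haarT] fun z =>
      (Real.sqrt N : ℂ) * Set.indicator (arc N i) (fun _ => (1 : ℂ)) z * u' z * ξ (N • z)) :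
    (∃ W : HT ≃ₗᵢ[ℂ] HT, ∀ i, ∀ ξ : HT, W (Su i ξ) = Su' i (W ξ))
    ↔
    (∃ Δ : Circle2π → ℂ, Measurable Δ ∧ (∀ z, ‖Δ z‖ = 1) ∧
      ∀ᵐ z ∂haarT, Δ z * u z = u' z * Δ (N • z)) := by
  have hN0 : (0 : ℝ) < N := by positivity
  have hs : (Real.sqrt N : ℂ) ≠ 0 := by
    exact_mod_cast (Real.sqrt_pos.2 hN0).ne'
  constructor
  · rintro ⟨W, hW⟩
    obtain ⟨Δ, hm, h1, hΔ⟩ := exists_symbol W fun E hE =>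
      good_all hN W (good_step hN hu_meas hu_mod hu'_mod hSu hSu' hW) hE
    refine ⟨Δ, hm, h1, ?_⟩
    let e : HT := indicatorConstLp 2 MeasurableSet.univ (measure_ne_top haarT Set.univ) 1
    have he : e =ᵐ[haarT] fun _ => 1 := by
      filter_upwards [indicatorConstLp_coeFn (p := 2) (hs := MeasurableSet.univ)
        (hμs := measure_ne_top haarT Set.univ) (c := (1 : ℂ))] with z a
      exact a.trans (by simp)
    have key : ∀ᵐ z ∂haarT, ∀ i, z ∈ arc N i → Δ z * u z = u' z * Δ (N • z) := by
      rw [ae_all_iff]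
      intro i
      have h2 := hSu' i (W e)
      rw [← hW] at h2
      filter_upwards [h2, hΔ (Su i e), hSu i e,
        (mp_nsmul hN).quasiMeasurePreserving.ae (hΔ e),
        (mp_nsmul hN).quasiMeasurePreserving.ae he] with z a b c d f hz
      rw [b, c, d, f, Set.indicator_of_mem hz] at a
      apply mul_left_cancel₀ hs
      linear_combination a
    filter_upwards [key] with z a
    obtain ⟨i, hi⟩ := exists_mem_arc hN z
    exact a i hi
  · rintro ⟨Δ, hm, h1, hΔ⟩
    obtain ⟨M, hM⟩ := exists_mulU hm h1
    refine ⟨M, fun i ξ => ?_⟩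
    apply Lp.ext
    filter_upwards [hM (Su i ξ), hSu i ξ, hSu' i (M ξ), hΔ,
      (mp_nsmul hN).quasiMeasurePreserving.ae (hM ξ)] with z a b c d f
    rw [a, b, c, f]
    linear_combination (Real.sqrt N : ℂ) * Set.indicator (arc N i) (fun _ => (1 : ℂ)) z
      * ξ (N • z) * d
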